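/- For λ₁ ≥ λ₂ ≥ 2, h₁ ≥ h₂ ≥ 2 and h₁ ≤ m ≤ h₁+h₂+λ₂−3, the identity C(m+λ₁−1, m−h₁)·C(m+λ₂−2, m−h₁)·QYT_{=m}(λ) = C(λ₁+h₂−2, m−h₁)·C(λ₂+h₂−3, m−h₁)·SSYT_m(λ) holds, where λ = (λ₁, λ₂, 2^{h₂−2}, 1^{h₁−h₂}). -/

import Mathlib

open YoungDiagram

/-- Entries of `T` are all `< m`.  Entries are 0-based: the value `v` represents the
positive integer `v + 1`, so this says all (1-based) entries are at most `m`. -/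
def EntryLE (μ : YoungDiagram) (T : SemistandardYoungTableau μ) (m : ℕ) : Prop :=
  ∀ i j : ℕ, (i, j) ∈ μ → T i j < m

/-- `T` is quasi-Yamanouchi: whenever a value `v > 0` appears, the leftmost
occurrence of `v` is weakly left of some occurrence of `v - 1`; equivalently some
occurrence of `v` is weakly left of some occurrence of `v - 1`. -/
def IsQY (μ : YoungDiagram) (T : SemistandardYoungTableau μ) : Prop :=
  ∀ v : ℕ, 0 < v → (∃ i j : ℕ, (i, j) ∈ μ ∧ T i j = v) →
    ∃ i j i' j' : ℕ, (i, j) ∈ μ ∧ (i', j') ∈ μ ∧ T i j = v ∧ T i' j' = v - 1 ∧ j ≤ j'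

/-- The maximum (1-based) entry of `T` is exactly `m`: all entries are `< m`
(0-based) and the value `m - 1` appears. -/
def MaxEq (μ : YoungDiagram) (T : SemistandardYoungTableau μ) (m : ℕ) : Prop :=
  EntryLE μ T m ∧ ∃ i j : ℕ, (i, j) ∈ μ ∧ T i j = m - 1

/-- The number of quasi-Yamanouchi tableaux of shape `μ` with maximum entry exactly `m`. -/
noncomputable def QYTeq (μ : YoungDiagram) (m : ℕ) : ℕ :=
  Nat.card {T : SemistandardYoungTableau μ // IsQY μ T ∧ MaxEq μ T m}

/-- The number of semistandard Young tableaux of shape `μ` with entries at most `m`. -/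
noncomputable def SSYTle (μ : YoungDiagram) (m : ℕ) : ℕ :=
  Nat.card {T : SemistandardYoungTableau μ // EntryLE μ T m}

/-- `T` is a standard Young tableau: each of the values `0, …, μ.card - 1`
(representing `1, …, n`) appears exactly once. -/
def IsSYT (μ : YoungDiagram) (T : SemistandardYoungTableau μ) : Prop :=
  ∀ v : ℕ, v < μ.card → ∃! p : ℕ × ℕ, p ∈ μ ∧ T p.1 p.2 = v

/-- The number of standard Young tableaux of shape `μ`. -/
noncomputable def SYTcount (μ : YoungDiagram) : ℕ :=
  Nat.card {T : SemistandardYoungTableau μ // IsSYT μ T}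

/-- The descent set of a standard tableau, in the paper's 1-based labelling:
`d ∈ Des T` iff `1 ≤ d ≤ n - 1` and the (1-based) entry `d + 1` (0-based value `d`)
appears weakly left of the (1-based) entry `d` (0-based value `d - 1`). -/
def Des (μ : YoungDiagram) (T : SemistandardYoungTableau μ) : Set ℕ :=
  {d | 1 ≤ d ∧ d ≤ μ.card - 1 ∧
    ∃ i j i' j' : ℕ, (i, j) ∈ μ ∧ (i', j') ∈ μ ∧ T i j = d ∧ T i' j' = d - 1 ∧ j ≤ j'}

/-- One destandardization step at value `v`: every occurrence of `v` lies strictly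
right of every occurrence of `v - 1` (in particular vacuously if no `v - 1` appears),
and `T'` is obtained from `T` by decrementing every entry equal to `v` to `v - 1`. -/
def StepAt (μ : YoungDiagram) (T T' : SemistandardYoungTableau μ) (v : ℕ) : Prop :=
  0 < v ∧ (∃ i j : ℕ, (i, j) ∈ μ ∧ T i j = v) ∧
    (∀ i j i' j' : ℕ, (i, j) ∈ μ → (i', j') ∈ μ → T i j = v → T i' j' = v - 1 → j' < j) ∧
    (∀ i j : ℕ, (i, j) ∈ μ → T' i j = if T i j = v then v - 1 else T i j)

/-- One destandardization step (at some value). -/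
def Step (μ : YoungDiagram) (T T' : SemistandardYoungTableau μ) : Prop :=
  ∃ v : ℕ, StepAt μ T T' v

/-- `Q` is the destandardization of `T`: it is reachable from `T` by destandardization
steps and no further step applies to it. -/
def IsDst (μ : YoungDiagram) (T Q : SemistandardYoungTableau μ) : Prop :=
  Relation.ReflTransGen (Step μ) T Q ∧ ∀ Q' : SemistandardYoungTableau μ, ¬ Step μ Q Q'

/-- The hook length of the box in row `i`, column `j` of `μ`. -/
def hookLength (μ : YoungDiagram) (i j : ℕ) : ℕ :=
  (μ.rowLen i - j) + (μ.colLen j - i) - 1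

/-- The hook-content product `∏_{u ∈ μ} (k + c(u)) / h(u)` where `c(u)` is the
content (column minus row) and `h(u)` the hook length. -/
noncomputable def hookContent (μ : YoungDiagram) (k : ℕ) : ℚ :=
  ∏ c ∈ μ.cells, ((k : ℚ) + (c.2 : ℚ) - (c.1 : ℚ)) / (hookLength μ c.1 c.2 : ℚ)

/-- `μ` is the partition `(l1, l2, 2^{h2-2}, 1^{h1-h2})`: first row `l1`, second row
`l2`, rows `2, …, h2 - 1` of length `2`, rows `h2, …, h1 - 1` of length `1`, and no
other rows; so the first column has height `h1` and the second column height `h2`. -/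
def HasRows2 (μ : YoungDiagram) (l1 l2 h1 h2 : ℕ) : Prop :=
  μ.rowLen 0 = l1 ∧ μ.rowLen 1 = l2 ∧
    (∀ i : ℕ, 2 ≤ i → i < h2 → μ.rowLen i = 2) ∧
    (∀ i : ℕ, h2 ≤ i → i < h1 → μ.rowLen i = 1) ∧
    (∀ i : ℕ, h1 ≤ i → μ.rowLen i = 0)

section aux
open Finset

lemma aux_term (a b d N M r : ℕ) (hN : N = a + b + d) (hr : r ≤ M) :
    ((M : ℤ) + a + d + 1) * (a.choose r * (b + d).choose (r + d) * (N + M - r).choose N) =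
    (a.choose r * (a + d + 1 + r) * (b+d).choose (r+d)) * ((N + 1 + M - r).choose (N+1) : ℤ)
    + a.choose r * (r + 1 + d) * (b+d).choose (r+1+d) * ((N + 1 + M - (r+1)).choose (N+1) : ℤ) := by
  obtain ⟨t, rfl⟩ := Nat.exists_eq_add_of_le hr
  have e1 : N + (r + t) - r = N + t := by omega
  have e2 : N + 1 + (r + t) - r = N + t + 1 := by omega
  have e3 : N + 1 + (r + t) - (r+1) = N + t := by omega
  rw [e1, e2, e3]
  have h1 := Nat.add_one_mul_choose_eq (N+t) N
  have h2 := Nat.choose_succ_succ (N+t) N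
  have h3 : ((b+d).choose (r+1+d) : ℤ) * (r + 1 + d) = (b+d).choose (r+d) * (b - r) := by
    rcases le_or_gt r b with h | h
    · have := Nat.choose_succ_right_eq (b+d) (r+d)
      have e : b + d - (r+d) = b - r := by omega
      rw [e] at this
      have e' : r + 1 + d = r + d + 1 := by ring
      rw [e']
      zify [h] at this
      linarith
    · rw [Nat.choose_eq_zero_of_lt (by omega), Nat.choose_eq_zero_of_lt (by omega)]; simp
  simp only [Nat.succ_eq_add_one] at h2
  zify at h1 h2
  have hNz : (N:ℤ) = a + b + d := by exact_mod_cast hN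
  push_cast
  linear_combination (a.choose r * (b+d).choose (r+d) : ℤ) * h1 + (a.choose r * ((N+t).choose (N+1) - ((N+t+1).choose (N+1) : ℤ)) : ℤ) * 0 + (a.choose r * (b+d).choose (r+d) * (b - r) : ℤ) * h2 * 1 - (a.choose r * (b+d).choose (r+d) * (N+t+1).choose (N+1) : ℤ) * hNz * 0 - (a.choose r : ℤ) * h3 * (N+t).choose (N+1) + (a.choose r * (b+d).choose (r+d) : ℤ) * (((N+t+1).choose (N+1) : ℤ) - (N+t).choose N) * hNz

theorem nanj (a b d M : ℕ) :
    ∑ r ∈ range (M+1), a.choose r * (b + d).choose (r + d) * (a + b + d + M - r).choose (a + b + d)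
      = (M + a + d).choose M * (M + b + d).choose b := by
  induction a with
  | zero =>
    rw [sum_range_succ', sum_eq_zero]
    · have e1 : M + b + d = M + d + b := by ring
      have e2 : 0 + b + d + M - 0 = M + d + b := by omega
      have e3 : 0 + b + d = b + d := by ring
      have e4 : M + d + b - b = M + d := by omega
      have := Nat.choose_mul (n := M + d + b) (k := b + d) (s := b) (by omega)
      rw [e4] at this
      have e5 : b + d - b = d := by omega
      rw [e5] at this
      rw [e1, e2, e3, add_zero, zero_add, Nat.choose_zero_right, zero_add, one_mul]
      rw [Nat.choose_symm_add (a := b) (b := d)] at this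
      rw [Nat.choose_symm_add (a := M) (b := d)]
      linarith
    · intro x _; simp
  | succ a ih =>
    have key : ((M : ℤ) + a + d + 1) * ∑ r ∈ range (M+1), (a.choose r * (b + d).choose (r + d) * (a + b + d + M - r).choose (a + b + d) : ℕ) =
        (a + 1 + d) * ∑ r ∈ range (M+1), ((a+1).choose r * (b + d).choose (r + d) * (a + 1 + b + d + M - r).choose (a + 1 + b + d) : ℕ) := by
      push_cast
      rw [mul_sum, mul_sum]
      have : ∀ r ∈ range (M+1), ((M : ℤ) + a + d + 1) * (a.choose r * (b + d).choose (r + d) * (a + b + d + M - r).choose (a + b + d)) = _ :=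
        fun r hr => aux_term a b d (a+b+d) M r rfl (by simp at hr; omega)
      rw [sum_congr rfl this, sum_add_distrib]
      have e : a + b + d + 1 = a + 1 + b + d := by ring
      rw [e]
      rw [sum_range_succ (fun r : ℕ => (a.choose r * (r + 1 + d) * (b+d).choose (r+1+d) * ((a + 1 + b + d + M - (r+1)).choose (a+1+b+d) : ℤ) : ℤ)) M]
      have z : ((a + 1 + b + d + M - (M+1)).choose (a+1+b+d)) = 0 := Nat.choose_eq_zero_of_lt (by omega)
      rw [z]
      rw [sum_range_succ', sum_range_succ']
      have : ∀ (A B C : ℤ), A + B + (C + 0) = (A + C) + B := by intros; ring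
      simp only [Nat.cast_zero, mul_zero]
      rw [this, ← sum_add_distrib]
      congr 1
      · apply sum_congr rfl
        intro r _
        have h1 := Nat.choose_succ_succ a r
        have h2 := Nat.choose_succ_right_eq a r
        simp only [Nat.succ_eq_add_one] at h1
        have h2' : (a.choose (r+1) : ℤ) * (r+1) = a.choose r * (a - r) := by
          rcases le_or_gt r a with h | h
          · zify [h] at h2; exact h2
          · rw [Nat.choose_eq_zero_of_lt (by omega), Nat.choose_eq_zero_of_lt (by omega)]; simp
        zify at h1
        rw [h1]
        push_cast
        linear_combination ((b+d).choose (r+1+d) * (a + 1 + b + d + M - (r+1)).choose (a+1+b+d) : ℤ) * h2'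
      · simp; ring
    rw [ih] at key
    have h1 := Nat.add_one_mul_choose_eq (M + a + d) (a + d)
    have s1 : (M + a + d).choose (a+d) = (M+a+d).choose M := by
      rw [add_assoc, Nat.choose_symm_add]
    have s2 : (M + a + d + 1).choose (a+d+1) = (M+(a+1)+d).choose M := by
      rw [show M + a + d + 1 = M + (a + d + 1) by ring, show M + (a+1) + d = M + (a+d+1) by ring, Nat.choose_symm_add]
    rw [s1, s2] at h1
    zify at h1
    have hp : (a + 1 + d : ℤ) ≠ 0 := by positivity
    zify
    apply mul_left_cancel₀ hp
    push_cast at key h1 ⊢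
    rw [← key]
    linear_combination ((M+b+d).choose b : ℤ) * h1


theorem card_monoHom (n q : ℕ) :
    Nat.card {w : Fin n →o ℕ // ∀ p, w p < q} = q.multichoose n := by
  rw [← Fintype.card_fin q, ← Sym.card_sym_eq_multichoose, Fintype.card_fin q, ← Nat.card_eq_fintype_card]
  let f : {w : Fin n →o ℕ // ∀ p, w p < q} → Sym (Fin q) n := fun w =>
    ⟨((List.ofFn fun p => (⟨w.1 p, w.2 p⟩ : Fin q)) : Multiset (Fin q)), by simp⟩
  apply Nat.card_congr (Equiv.ofBijective f ⟨?_, ?_⟩)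
  · intro w w' h
    have h1 : ((List.ofFn fun p => (⟨w.1 p, w.2 p⟩ : Fin q)) : Multiset (Fin q)) = (List.ofFn fun p => (⟨w'.1 p, w'.2 p⟩ : Fin q)) := congrArg Subtype.val h
    rw [Multiset.coe_eq_coe] at h1
    have s : ∀ w : {w : Fin n →o ℕ // ∀ p, w p < q}, (List.ofFn fun p => (⟨w.1 p, w.2 p⟩ : Fin q)).SortedLE := by
      intro w
      rw [List.sortedLE_ofFn_iff]
      intro a b hab
      exact w.1.monotone hab
    have := h1.eq_of_sortedLE (s w) (s w')
    have := List.ofFn_injective this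
    ext p
    have := congrFun this p
    simpa using this
  · intro t
    have hl : (t.1.sort (· ≤ ·)).length = n := by simp
    refine ⟨⟨⟨fun p => ((t.1.sort (· ≤ ·)).get (p.cast hl.symm) : Fin q), ?_⟩, ?_⟩, ?_⟩
    · intro a b hab
      have := (Multiset.pairwise_sort t.1 (· ≤ ·)).sortedLE.monotone_get (a := a.cast hl.symm) (b := b.cast hl.symm) hab
      exact this
    · intro p
      exact Fin.is_lt _
    · apply Subtype.ext
      simp only [f]
      conv_rhs => rw [← Multiset.sort_eq t.1 (· ≤ ·)]
      congr 1
      apply List.ext_get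
      · simp
      · intro i h1 h2
        apply Fin.ext
        simp
        rfl

def dl (c : ℕ → ℕ) (p : ℕ) : ℕ := #{d ∈ range p | c (d+1) ≤ c d}

lemma dl_zero (c : ℕ → ℕ) : dl c 0 = 0 := by simp [dl]

lemma dl_succ (c : ℕ → ℕ) (p : ℕ) : dl c (p+1) = dl c p + if c (p+1) ≤ c p then 1 else 0 := by
  unfold dl
  rw [range_add_one, filter_insert]
  split_ifs
  · rw [card_insert_of_notMem (by simp)]
  · simp

lemma dl_mono (c : ℕ → ℕ) : Monotone (dl c) :=
  monotone_nat_of_le_succ fun p => by rw [dl_succ]; omega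

lemma dl_col (c : ℕ → ℕ) (p q : ℕ) (hpq : p < q) (h : dl c p = dl c q) : c p < c q := by
  induction q, hpq using Nat.le_induction with
  | base =>
    rw [dl_succ] at h
    by_contra h'
    rw [if_pos (not_lt.1 h')] at h; omega
  | succ q hq ih =>
    have h1 := dl_mono c (show p ≤ q by omega)
    have h2 := dl_succ c q
    split_ifs at h2 with h3
    · omega
    · have := ih (by omega)
      omega

/-- standard fillings -/
abbrev SF (μ : YoungDiagram) := {s : {x // x ∈ μ.cells} ≃ Fin μ.card // ∀ x y, x.1 ≤ y.1 → s x ≤ s y}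

def colf {μ : YoungDiagram} (s : SF μ) (p : ℕ) : ℕ :=
  if h : p < μ.card then (s.1.symm ⟨p, h⟩).1.2 else 0

lemma colf_s {μ : YoungDiagram} (s : SF μ) (x : {x // x ∈ μ.cells}) : colf s (s.1 x) = x.1.2 := by
  simp [colf]

def tau {μ : YoungDiagram} (s : SF μ) (w : Fin μ.card →o ℕ) (p : Fin μ.card) : ℕ := w p + dl (colf s) p

lemma tau_mono {μ : YoungDiagram} (s : SF μ) (w : Fin μ.card →o ℕ) : Monotone (tau s w) := by
  intro p q h
  exact add_le_add (w.monotone h) (dl_mono _ h)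

lemma tau_col {μ : YoungDiagram} (s : SF μ) (w : Fin μ.card →o ℕ) (x y : {x // x ∈ μ.cells})
   (h : s.1 x < s.1 y) (ht : tau s w (s.1 x) = tau s w (s.1 y)) : x.1.2 < y.1.2 := by
  rw [← colf_s s x, ← colf_s s y]
  apply dl_col _ _ _ h
  have h1 := w.monotone h.le
  have h2 := dl_mono (colf s) (show (s.1 x : ℕ) ≤ s.1 y from h.le)
  unfold tau at ht
  omega

lemma tau_key {μ : YoungDiagram} (s : SF μ) (w : Fin μ.card →o ℕ) (x y : {x // x ∈ μ.cells}) :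
   s.1 x < s.1 y ↔ toLex (tau s w (s.1 x), x.1.2) < toLex (tau s w (s.1 y), y.1.2) := by
  have main : ∀ x y : {x // x ∈ μ.cells}, s.1 x < s.1 y → toLex (tau s w (s.1 x), x.1.2) < toLex (tau s w (s.1 y), y.1.2) := by
    intro x y h
    rw [Prod.Lex.toLex_lt_toLex]
    rcases (tau_mono s w h.le).lt_or_eq with h1 | h1
    · exact Or.inl h1
    · exact Or.inr ⟨h1, tau_col s w x y h h1⟩
  refine ⟨main x y, fun h => ?_⟩
  rcases lt_trichotomy (s.1 x) (s.1 y) with h1 | h1 | h1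
  · exact h1
  · have := s.1.injective h1
    subst this
    exact absurd h (lt_irrefl _)
  · exact absurd h (main y x h1).asymm

def mkT {μ : YoungDiagram} (s : SF μ) (w : Fin μ.card →o ℕ) : SemistandardYoungTableau μ where
  entry i j := if h : (i, j) ∈ μ.cells then tau s w (s.1 ⟨(i,j), h⟩) else 0
  row_weak' := by
    intro i j1 j2 hj h2
    have h1 : (i, j1) ∈ μ.cells := μ.up_left_mem le_rfl hj.le h2
    have h2 : (i, j2) ∈ μ.cells := h2
    rw [dif_pos h1, dif_pos h2]
    exact tau_mono s w (s.2 _ _ ⟨le_rfl, hj.le⟩)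
  col_strict' := by
    intro i1 i2 j hi h2
    have h1 : (i1, j) ∈ μ.cells := μ.up_left_mem hi.le le_rfl h2
    have h2 : (i2, j) ∈ μ.cells := h2
    rw [dif_pos h1, dif_pos h2]
    have hs := s.2 ⟨(i1,j), h1⟩ ⟨(i2,j), h2⟩ ⟨hi.le, le_rfl⟩
    have hne : s.1 ⟨(i1,j), h1⟩ ≠ s.1 ⟨(i2,j), h2⟩ := by
      intro h
      have := s.1.injective h
      simp at this
      omega
    have hlt := lt_of_le_of_ne hs hne
    apply lt_of_le_of_ne (tau_mono s w hs)
    intro h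
    have := tau_col s w _ _ hlt h
    exact lt_irrefl _ this
  zeros' := by
    intro i j h
    exact dif_neg h

lemma mkT_apply {μ : YoungDiagram} (s : SF μ) (w : Fin μ.card →o ℕ) (x : {x // x ∈ μ.cells}) :
    mkT s w x.1.1 x.1.2 = tau s w (s.1 x) := by
  show (if h : (x.1.1, x.1.2) ∈ μ.cells then tau s w (s.1 ⟨(x.1.1,x.1.2), h⟩) else 0) = _
  rw [dif_pos x.2]

lemma mkT_inj {μ : YoungDiagram} (s s' : SF μ) (w w' : Fin μ.card →o ℕ) (h : mkT s w = mkT s' w') :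
    s = s' ∧ w = w' := by
  have ht : ∀ x, tau s w (s.1 x) = tau s' w' (s'.1 x) := by
    intro x; rw [← mkT_apply, ← mkT_apply, h]
  have hs : ∀ x y, s.1 x < s.1 y ↔ s'.1 x < s'.1 y := by
    intro x y
    rw [tau_key s w, tau_key s' w', ht, ht]
  have hss : s = s' := by
    let e : Fin μ.card ≃o Fin μ.card :=
      { s.1.symm.trans s'.1 with
        map_rel_iff' := by
          intro a b
          have := hs (s.1.symm b) (s.1.symm a)
          simp at this ⊢
          rw [← not_lt, ← not_lt, this] }
    have he : e = OrderIso.refl _ := Subsingleton.elim _ _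
    apply Subtype.ext
    ext x
    have := congrArg (fun f => f (s.1 x)) he
    simp [e] at this
    rw [this]
  subst hss
  refine ⟨rfl, ?_⟩
  ext p
  have := ht (s.1.symm p)
  simp [tau] at this
  exact this

lemma exists_rank {α β : Type} [Fintype α] [LinearOrder β] (key : α → β) (hk : Function.Injective key)
    (n : ℕ) (hn : Fintype.card α = n) : ∃ e : α ≃ Fin n, ∀ x y, e x ≤ e y ↔ key x ≤ key y := by
  let _ : LinearOrder α := LinearOrder.lift' key hk
  let e : α ≃o Fin n := (Fintype.orderIsoFinOfCardEq _ hn).symm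
  exact ⟨e.toEquiv, fun x y => e.le_iff_le⟩

lemma mkT_surj {μ : YoungDiagram} (T : SemistandardYoungTableau μ) : ∃ s w, mkT (μ := μ) s w = T := by
  let key : {x // x ∈ μ.cells} → ℕ ×ₗ ℕ := fun x => toLex (T x.1.1 x.1.2, x.1.2)
  have hk : Function.Injective key := by
    rintro ⟨⟨i, j⟩, h⟩ ⟨⟨i', j'⟩, h'⟩ hh
    have h0 := toLex.injective hh
    simp at h0
    obtain ⟨h1, rfl⟩ := h0
    rcases lt_trichotomy i i' with h2 | h2 | h2
    · have := T.col_strict h2 h'; omega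
    · simp [h2]
    · have := T.col_strict h2 h; omega
  obtain ⟨e, he⟩ := exists_rank key hk μ.card (Fintype.card_coe _)
  let s : SF μ := ⟨e, by
    rintro ⟨⟨i, j⟩, h⟩ ⟨⟨i', j'⟩, h'⟩ ⟨h1, h2⟩
    simp only at h1 h2
    refine (he _ _).2 ?_
    simp only [key]
    rw [Prod.Lex.toLex_le_toLex]
    have a1 := T.row_weak_of_le h2 (μ.up_left_mem h1 le_rfl h')
    have a2 := T.col_weak h1 h'
    simp only
    omega⟩
  let t : ℕ → ℕ := fun p => if h : p < μ.card then T (s.1.symm ⟨p,h⟩).1.1 (s.1.symm ⟨p,h⟩).1.2 else 0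
  have hstep : ∀ p, p + 1 < μ.card → t p + dl (colf s) (p+1) ≤ t (p+1) + dl (colf s) p := by
    intro p hp
    rw [dl_succ]
    have h0 : p < μ.card := by omega
    have h1 : key (s.1.symm ⟨p, h0⟩) < key (s.1.symm ⟨p+1, hp⟩) := by
      rw [← not_le, ← he]
      have : ∀ q, e (s.1.symm q) = q := fun q => s.1.apply_symm_apply q
      rw [this, this]
      simp
    simp only [key, Prod.Lex.toLex_lt_toLex] at h1
    simp only [t, dif_pos h0, dif_pos hp, colf]
    split_ifs <;> omega
  have hmono : ∀ p q, p ≤ q → q < μ.card → t p + dl (colf s) q ≤ t q + dl (colf s) p := by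
    intro p q hpq
    induction q, hpq using Nat.le_induction with
    | base => intro _; exact le_rfl
    | succ q hq ih =>
      intro h
      have := ih (by omega)
      have := hstep q h
      omega
  have hle : ∀ q, q < μ.card → dl (colf s) q ≤ t q := by
    intro q hq
    have := hmono 0 q (by omega) hq
    rw [dl_zero] at this
    omega
  refine ⟨s, ⟨fun p => t p - dl (colf s) p, ?_⟩, ?_⟩
  · intro p q hpq
    have := hmono p q hpq q.2
    have := hle p p.2
    have := hle q q.2
    simp only
    omega
  · ext i j
    by_cases h : (i, j) ∈ μ.cells
    · rw [mkT_apply s _ ⟨(i,j), h⟩]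
      unfold tau
      have := hle _ (s.1 ⟨(i,j),h⟩).2
      show t (s.1 ⟨(i,j),h⟩) - dl (colf s) (s.1 ⟨(i,j),h⟩) + dl (colf s) (s.1 ⟨(i,j),h⟩) = _
      rw [Nat.sub_add_cancel this]
      simp [t]
    · rw [SemistandardYoungTableau.zeros _ h, SemistandardYoungTableau.zeros _ h]

noncomputable def ssytEquiv (μ : YoungDiagram) : SF μ × (Fin μ.card →o ℕ) ≃ SemistandardYoungTableau μ :=
  Equiv.ofBijective (fun x => mkT x.1 x.2) ⟨fun x y h => Prod.ext (mkT_inj _ _ _ _ h).1 (mkT_inj _ _ _ _ h).2,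
    fun T => by obtain ⟨s, w, h⟩ := mkT_surj T; exact ⟨(s, w), h⟩⟩

def des {μ : YoungDiagram} (s : SF μ) : ℕ := dl (colf s) (μ.card - 1)

lemma le_des {μ : YoungDiagram} (s : SF μ) (p : Fin μ.card) : dl (colf s) p ≤ des s :=
  dl_mono _ (by have := p.2; omega)

lemma mkT_forall {μ : YoungDiagram} (s : SF μ) (w : Fin μ.card →o ℕ) (P : ℕ → Prop) :
    (∀ i j, (i, j) ∈ μ → P (mkT s w i j)) ↔ ∀ p, P (tau s w p) := by
  constructor
  · intro h p
    have := h _ _ (s.1.symm p).2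
    rw [mkT_apply] at this
    simpa using this
  · intro h i j hij
    have := mkT_apply s w ⟨(i,j), hij⟩
    simp only at this
    rw [this]
    exact h _

lemma entryLE_iff {μ : YoungDiagram} (hn : 0 < μ.card) (s : SF μ) (w : Fin μ.card →o ℕ) (m : ℕ) :
    EntryLE μ (mkT s w) m ↔ ∀ p, w p < m - des s := by
  unfold EntryLE
  rw [mkT_forall s w (fun t => t < m)]
  constructor
  · intro h p
    have h1 := h ⟨μ.card - 1, by omega⟩
    have h2 : w p ≤ w ⟨μ.card - 1, by omega⟩ := w.monotone (by rw [Fin.le_def]; have := p.2; simp; omega)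
    unfold tau at h1
    unfold des
    simp only at h1
    omega
  · intro h p
    have h1 := h p
    have := le_des s p
    unfold tau
    omega

lemma isQY_iff {μ : YoungDiagram} (s : SF μ) (w : Fin μ.card →o ℕ) :
    IsQY μ (mkT s w) ↔ ∀ p, w p = 0 := by
  have hT : ∀ x : {x // x ∈ μ.cells}, mkT s w x.1.1 x.1.2 = tau s w (s.1 x) := mkT_apply s w
  constructor
  · intro h
    have aux : ∀ p (hp : p < μ.card), w ⟨p, hp⟩ = 0 := by
      intro p
      induction p with
      | zero =>
        intro hp
        by_contra h0
        have ht : tau s w ⟨0, hp⟩ = w ⟨0, hp⟩ := by simp [tau, dl_zero]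
        obtain ⟨i, j, i', j', h1, h2, h3, h4, h5⟩ := h (w ⟨0, hp⟩) (by omega)
          ⟨_, _, (s.1.symm ⟨0, hp⟩).2, by rw [hT]; simp [ht]⟩
        have h6 := hT ⟨(i',j'), h2⟩
        simp only at h6
        have := tau_mono s w (show ⟨0, hp⟩ ≤ s.1 ⟨(i',j'),h2⟩ by rw [Fin.le_def]; simp)
        omega
      | succ p ih =>
        intro hp
        have hp0 : p < μ.card := by omega
        have ih := ih hp0
        by_contra h0
        have t0 : tau s w ⟨p, hp0⟩ = dl (colf s) p := by simp [tau, ih]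
        have t1 : tau s w ⟨p+1, hp⟩ = w ⟨p+1, hp⟩ + dl (colf s) (p+1) := by simp [tau]
        have hm := dl_succ (colf s) p
        obtain ⟨i, j, i', j', h1, h2, h3, h4, h5⟩ := h (tau s w ⟨p+1, hp⟩) (by omega)
          ⟨_, _, (s.1.symm ⟨p+1, hp⟩).2, by rw [hT]; simp⟩
        have h6 := hT ⟨(i',j'), h2⟩
        have h7 := hT ⟨(i,j), h1⟩
        simp only at h6 h7
        have h8 : s.1 ⟨(i',j'), h2⟩ ≤ ⟨p, hp0⟩ := by
          by_contra h9
          have h9 : (⟨p+1, hp⟩ : Fin μ.card) ≤ s.1 ⟨(i',j'), h2⟩ := by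
            rw [Fin.le_def] at h9 ⊢; simp at h9 ⊢; omega
          have := tau_mono s w h9
          omega
        have h10 := tau_mono s w h8
        have h11 : ¬ (colf s (p+1) ≤ colf s p) := by
          intro h12
          rw [if_pos h12] at hm
          omega
        have h13 : (⟨p+1, hp⟩ : Fin μ.card) ≤ s.1 ⟨(i,j), h1⟩ := by
          by_contra h9
          have h9 : s.1 ⟨(i,j), h1⟩ ≤ ⟨p, hp0⟩ := by
            rw [Fin.le_def] at h9 ⊢; simp at h9 ⊢; omega
          have := tau_mono s w h9
          omega
        have c1 : j' ≤ colf s p := by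
          rcases h8.lt_or_eq with h | h
          · have := tau_col s w ⟨(i',j'), h2⟩ (s.1.symm ⟨p, hp0⟩) (by simpa using h) (by simp; omega)
            have e := colf_s s (s.1.symm ⟨p, hp0⟩)
            simp at e this
            omega
          · have e := colf_s s ⟨(i',j'), h2⟩
            rw [h] at e
            simp at e; omega
        have c2 : colf s (p+1) ≤ j := by
          rcases h13.lt_or_eq with h | h
          · have := tau_col s w (s.1.symm ⟨p+1, hp⟩) ⟨(i,j), h1⟩ (by simpa using h) (by simp; omega)
            have e := colf_s s (s.1.symm ⟨p+1, hp⟩)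
            simp at e this
            omega
          · have e := colf_s s ⟨(i,j), h1⟩
            rw [← h] at e
            simp at e; omega
        omega
    intro p
    exact aux p.1 p.2
  · intro hw v hv hex
    have ht : ∀ p, tau s w p = dl (colf s) p := by intro p; simp [tau, hw]
    have aux : ∀ p, p < μ.card → dl (colf s) p = v → ∃ q, q + 1 < μ.card ∧ dl (colf s) (q+1) = v ∧ dl (colf s) q = v - 1 ∧ colf s (q+1) ≤ colf s q := by
      intro p
      induction p with
      | zero => intro _ h; rw [dl_zero] at h; omega
      | succ p ih =>
        intro hp h
        have hs := dl_succ (colf s) p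
        split_ifs at hs with hc
        · exact ⟨p, hp, h, by omega, hc⟩
        · exact ih (by omega) (by omega)
    obtain ⟨i, j, hij, he⟩ := hex
    have h7 := hT ⟨(i,j), hij⟩
    simp only at h7
    obtain ⟨q, hq, h1, h2, h3⟩ := aux (s.1 ⟨(i,j),hij⟩) (Fin.is_lt _) (by rw [← ht]; omega)
    have hq0 : q < μ.card := by omega
    refine ⟨_, _, _, _, (s.1.symm ⟨q+1, hq⟩).2, (s.1.symm ⟨q, hq0⟩).2, ?_, ?_, ?_⟩
    · rw [hT]; simp [ht, h1]
    · rw [hT]; simp [ht, h2]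
    · simpa [colf, hq, hq0] using h3

lemma qy_max_iff {μ : YoungDiagram} (hn : 0 < μ.card) (s : SF μ) (w : Fin μ.card →o ℕ) (r : ℕ) :
    (IsQY μ (mkT s w) ∧ MaxEq μ (mkT s w) (r+1)) ↔ des s = r ∧ w = ⟨fun _ => 0, fun _ _ _ => le_rfl⟩ := by
  rw [isQY_iff, MaxEq, entryLE_iff hn]
  have hT : ∀ x : {x // x ∈ μ.cells}, mkT s w x.1.1 x.1.2 = tau s w (s.1 x) := mkT_apply s w
  constructor
  · rintro ⟨hw, h1, i, j, hij, h2⟩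
    refine ⟨?_, ?_⟩
    · have h3 := h1 ⟨0, hn⟩
      have h7 := hT ⟨(i,j), hij⟩
      simp only at h7
      have h4 := le_des s (s.1 ⟨(i,j), hij⟩)
      rw [h2] at h7
      simp only [tau, hw] at h7
      omega
    · ext p; exact hw p
  · rintro ⟨h, rfl⟩
    refine ⟨fun _ => rfl, fun p => ?_, _, _, (s.1.symm ⟨μ.card - 1, by omega⟩).2, ?_⟩
    · show 0 < _
      omega
    · rw [hT]
      simp only [tau, Equiv.apply_symm_apply]
      show 0 + des s = _
      omega

lemma QYTeq_eq {μ : YoungDiagram} (hn : 0 < μ.card) (r : ℕ) :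
    QYTeq μ (r+1) = #{s : SF μ | des s = r} := by
  unfold QYTeq
  rw [← Nat.card_congr ((ssytEquiv μ).subtypeEquivOfSubtype (p := fun T => IsQY μ T ∧ MaxEq μ T (r+1)))]
  rw [← Fintype.card_subtype, ← Nat.card_eq_fintype_card]
  have key := fun x : SF μ × (Fin μ.card →o ℕ) => qy_max_iff hn x.1 x.2 r
  apply Nat.card_congr
  exact { toFun := fun x => ⟨x.1.1, ((key x.1).1 x.2).1⟩
          invFun := fun s => ⟨(s.1, ⟨fun _ => 0, fun _ _ _ => le_rfl⟩), (key _).2 ⟨s.2, rfl⟩⟩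
          left_inv := fun x => Subtype.ext (Prod.ext rfl ((key x.1).1 x.2).2.symm)
          right_inv := fun s => rfl }

lemma finite_mono (n q : ℕ) : Finite {w : Fin n →o ℕ // ∀ p, w p < q} := by
  apply Finite.of_injective (β := Fin n → Fin q) (fun w p => ⟨w.1 p, w.2 p⟩)
  intro w w' h
  ext p
  have := congrFun h p
  simpa using this

lemma SSYTle_eq {μ : YoungDiagram} (hn : 0 < μ.card) (m : ℕ) :
    SSYTle μ m = ∑ s : SF μ, (m - des s).multichoose μ.card := by
  unfold SSYTle
  rw [← Nat.card_congr ((ssytEquiv μ).subtypeEquivOfSubtype (p := fun T => EntryLE μ T m))]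
  have key := fun x : SF μ × (Fin μ.card →o ℕ) => entryLE_iff hn x.1 x.2 m
  have : ∀ s : SF μ, Finite {w : Fin μ.card →o ℕ // ∀ p, w p < m - des s} := fun s => finite_mono _ _
  simp only [← card_monoHom]
  rw [← Nat.card_sigma]
  apply Nat.card_congr
  exact { toFun := fun x => ⟨x.1.1, x.1.2, (key x.1).1 x.2⟩
          invFun := fun y => ⟨(y.1, y.2.1), (key _).2 y.2.2⟩
          left_inv := fun x => rfl
          right_inv := fun y => rfl }

theorem SSYT_sum {μ : YoungDiagram} (hn : 0 < μ.card) (m : ℕ) :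
    SSYTle μ m = ∑ r ∈ range m, QYTeq μ (r+1) * (μ.card + (m - 1 - r)).choose μ.card := by
  rw [SSYTle_eq hn]
  have h0 : ∀ s : SF μ, s ∈ univ → s ∉ ({s | des s < m} : Finset (SF μ)) → (m - des s).multichoose μ.card = 0 := by
    intro s _ hs
    simp at hs
    rw [Nat.sub_eq_zero_of_le hs]
    obtain ⟨k, hk⟩ := Nat.exists_eq_succ_of_ne_zero hn.ne'
    rw [hk, Nat.multichoose_zero_succ]
  rw [← sum_subset (subset_univ ({s | des s < m} : Finset (SF μ))) h0]
  rw [← sum_fiberwise_of_maps_to (t := range m) (g := des) (by simp)]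
  apply sum_congr rfl
  intro r hr
  simp at hr
  rw [QYTeq_eq hn]
  have : ({s ∈ ({s | des s < m} : Finset (SF μ)) | des s = r}) = ({s | des s = r} : Finset (SF μ)) := by
    ext s; simp; omega
  rw [this, card_eq_sum_ones, sum_mul]
  apply sum_congr rfl
  intro s hs
  simp at hs
  rw [hs, Nat.multichoose_eq, one_mul]
  congr 1
  omega

def Fill (l : ℕ → ℕ) (m : ℕ) : Set (ℕ → ℕ → ℕ) :=
  {T | (∀ i j1 j2, j1 < j2 → j2 < l i → T i j1 ≤ T i j2) ∧
    (∀ i1 i2 j, i1 < i2 → j < l i2 → T i1 j < T i2 j) ∧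
    (∀ i j, l i ≤ j → T i j = 0) ∧ (∀ i j, j < l i → T i j < m)}

def extr {m : ℕ} (r : Fin m → ℕ) (k : ℕ) : ℕ := if h : k < m then r ⟨m - 1 - k, by omega⟩ else 0

def RR (l : ℕ → ℕ) (m : ℕ) : Finset (Fin m → ℕ) :=
  Fintype.piFinset fun i : Fin m => Icc (l (m - i)) (l (m - 1 - i))

lemma RR_iff (l : ℕ → ℕ) (m : ℕ) (r : Fin m → ℕ) :
    r ∈ RR l m ↔ ∀ k, k < m → l (k+1) ≤ extr r k ∧ extr r k ≤ l k := by
  unfold RR extr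
  simp only [Fintype.mem_piFinset, mem_Icc]
  constructor
  · intro h k hk
    have := h ⟨m - 1 - k, by omega⟩
    simp only at this
    rw [dif_pos hk]
    rwa [show m - (m - 1 - k) = k + 1 by omega, show m - 1 - (m - 1 - k) = k by omega] at this
  · intro h i
    have := h (m - 1 - i) (by have := i.2; omega)
    rw [dif_pos (by have := i.2; omega)] at this
    have e : (⟨m - 1 - (m - 1 - i), by have := i.2; omega⟩ : Fin m) = i := by
      apply Fin.ext; simp; have := i.2; omega
    rw [e, show m - 1 - i.1 + 1 = m - i by have := i.2; omega] at this
    exact this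

lemma extr_anti (l : ℕ → ℕ) (m : ℕ) (r : Fin m → ℕ) (hr : r ∈ RR l m) : Antitone (extr r) := by
  rw [RR_iff] at hr
  apply antitone_nat_of_succ_le
  intro k
  by_cases h : k + 1 < m
  · exact (hr (k+1) h).2.trans (hr k (by omega)).1
  · rw [extr, dif_neg h]; omega

lemma extr_zero {m : ℕ} (r : Fin m → ℕ) (k : ℕ) (h : m ≤ k) : extr r k = 0 := by
  rw [extr, dif_neg (by omega)]

lemma Fill_ge {l : ℕ → ℕ} (hl : Antitone l) {m : ℕ} {T : ℕ → ℕ → ℕ} (hT : T ∈ Fill l m) (i j : ℕ)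
    (h : j < l i) : i ≤ T i j := by
  induction i with
  | zero => omega
  | succ i ih =>
    have h1 := ih (lt_of_lt_of_le h (hl (Nat.le_succ i)))
    have := hT.2.1 i (i+1) j (by omega) h
    omega

def cnt (l : ℕ → ℕ) (m : ℕ) (T : ℕ → ℕ → ℕ) (k : ℕ) : ℕ := #{j ∈ range (l k) | T k j < m}

lemma cnt_le (l : ℕ → ℕ) (m : ℕ) (T : ℕ → ℕ → ℕ) (k : ℕ) : cnt l m T k ≤ l k := by
  unfold cnt
  exact (card_filter_le _ _).trans (by simp)

lemma cnt_eq (l : ℕ → ℕ) (m : ℕ) (T : ℕ → ℕ → ℕ) (k c : ℕ) (h : ∀ j, (j < l k ∧ T k j < m) ↔ j < c) :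
    cnt l m T k = c := by
  unfold cnt
  have : ({j ∈ range (l k) | T k j < m}) = range c := by
    ext j; simp [h]
  rw [this, card_range]

lemma cnt_iff {l : ℕ → ℕ} {m m' : ℕ} {T : ℕ → ℕ → ℕ} (hT : T ∈ Fill l m') (k j : ℕ) :
    j < cnt l m T k ↔ (j < l k ∧ T k j < m) := by
  have ex : ∃ c, ∀ j, (j < l k ∧ T k j < m) ↔ j < c := by
    classical
    have hex : ∃ c, ¬ (c < l k ∧ T k c < m) := ⟨l k, by simp⟩
    refine ⟨Nat.find hex, fun j => ⟨fun h => ?_, fun h => ?_⟩⟩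
    · by_contra h1
      have h2 := Nat.find_spec hex
      replace h1 := not_lt.1 h1
      apply h2
      refine ⟨by omega, ?_⟩
      rcases h1.lt_or_eq with h3 | h3
      · exact lt_of_le_of_lt (hT.1 k _ _ h3 h.1) h.2
      · rw [h3]; exact h.2
    · have := Nat.find_min hex h
      push Not at this
      by_contra h2
      exact h2 ⟨this.1, this.2⟩
  obtain ⟨c, hc⟩ := ex
  rw [cnt_eq l m T k c hc, hc]

lemma extr_cnt {l : ℕ → ℕ} (hl : Antitone l) {m : ℕ} {T : ℕ → ℕ → ℕ} (hT : T ∈ Fill l (m+1)) :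
    extr (fun i : Fin m => cnt l m T (m - 1 - i)) = cnt l m T := by
  funext k
  unfold extr
  split_ifs with h
  · simp only; congr 1; omega
  · symm
    apply cnt_eq
    intro j
    constructor
    · intro h1
      have := Fill_ge hl hT k j h1.1
      omega
    · omega

lemma red_mem {l : ℕ → ℕ} (hl : Antitone l) {m : ℕ} {T : ℕ → ℕ → ℕ} (hT : T ∈ Fill l (m+1)) :
    (fun i : Fin m => cnt l m T (m - 1 - i)) ∈ RR l m ∧
    (fun i j => if j < cnt l m T i then T i j else 0) ∈ Fill (cnt l m T) m := by
  have hR : (fun i : Fin m => cnt l m T (m - 1 - i)) ∈ RR l m := by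
    rw [RR_iff, extr_cnt hl hT]
    intro k hk
    refine ⟨?_, cnt_le _ _ _ _⟩
    by_contra h
    push Not at h
    have h1 : ¬ (cnt l m T k < cnt l m T k) := lt_irrefl _
    rw [cnt_iff hT] at h1
    apply h1
    have h2 := hT.2.1 k (k+1) _ (by omega) h
    have h3 := hT.2.2.2 (k+1) _ h
    exact ⟨lt_of_lt_of_le h (hl (Nat.le_succ k)), by omega⟩
  refine ⟨hR, ?_, ?_, ?_, ?_⟩
  · intro i j1 j2 h1 h2
    simp only
    rw [if_pos h2, if_pos (by omega)]
    exact hT.1 i j1 j2 h1 ((cnt_iff hT _ _).1 h2).1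
  · intro i1 i2 j h1 h2
    have ha := extr_anti l m _ hR
    rw [extr_cnt hl hT] at ha
    simp only
    rw [if_pos h2, if_pos (lt_of_lt_of_le h2 (ha h1.le))]
    exact hT.2.1 i1 i2 j h1 ((cnt_iff hT _ _).1 h2).1
  · intro i j h
    simp only
    rw [if_neg (by omega)]
  · intro i j h
    simp only
    rw [if_pos h]
    exact ((cnt_iff hT _ _).1 h).2

def expa (l : ℕ → ℕ) (m : ℕ) (ν : ℕ → ℕ) (T : ℕ → ℕ → ℕ) (i j : ℕ) : ℕ :=
  if j < ν i then T i j else if j < l i then m else 0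

lemma expa_mem {l : ℕ → ℕ} {m : ℕ} (h0 : ∀ i, m + 1 ≤ i → l i = 0) (hl : Antitone l) {r : Fin m → ℕ}
    (hr : r ∈ RR l m) {T : ℕ → ℕ → ℕ} (hT : T ∈ Fill (extr r) m) : expa l m (extr r) T ∈ Fill l (m+1) := by
  have ha := extr_anti l m _ hr
  rw [RR_iff] at hr
  have hle : ∀ k, extr r k ≤ l k := by
    intro k
    by_cases h : k < m
    · exact (hr k h).2
    · rw [extr_zero r k (by omega)]; omega
  refine ⟨?_, ?_, ?_, ?_⟩
  · intro i j1 j2 h1 h2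
    unfold expa
    by_cases h3 : j2 < extr r i
    · rw [if_pos h3, if_pos (by omega)]
      exact hT.1 _ _ _ h1 h3
    · rw [if_neg h3, if_pos h2]
      split_ifs with h4 h5
      · exact (hT.2.2.2 _ _ h4).le
      · exact le_rfl
      · omega
  · intro i1 i2 j h1 h2
    have h3 : i2 ≤ m := by
      by_contra h
      rw [h0 i2 (by omega)] at h2; omega
    have h4 : j < extr r i1 := lt_of_lt_of_le (lt_of_lt_of_le h2 (hl (show i1 + 1 ≤ i2 by omega))) (hr i1 (by omega)).1
    unfold expa
    rw [if_pos h4]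
    split_ifs with h5
    · exact hT.2.1 _ _ _ h1 h5
    · exact hT.2.2.2 _ _ h4
  · intro i j h
    unfold expa
    rw [if_neg (by have := hle i; omega), if_neg (by omega)]
  · intro i j h
    unfold expa
    split_ifs with h1
    · have := hT.2.2.2 _ _ h1; omega
    · omega

lemma cnt_expa {l : ℕ → ℕ} {m : ℕ} {r : Fin m → ℕ}
    (hr : r ∈ RR l m) {T : ℕ → ℕ → ℕ} (hT : T ∈ Fill (extr r) m) (k : ℕ) :
    cnt l m (expa l m (extr r) T) k = extr r k := by
  rw [RR_iff] at hr
  have hle : extr r k ≤ l k := by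
    by_cases h : k < m
    · exact (hr k h).2
    · rw [extr_zero r k (by omega)]; omega
  apply cnt_eq
  intro j
  unfold expa
  constructor
  · rintro ⟨h1, h2⟩
    by_contra h
    rw [if_neg h, if_pos h1] at h2; omega
  · intro h
    rw [if_pos h]
    exact ⟨by omega, hT.2.2.2 _ _ h⟩

def fillEquiv (l : ℕ → ℕ) (hl : Antitone l) (m : ℕ) (h0 : ∀ i, m + 1 ≤ i → l i = 0) :
    Fill l (m+1) ≃ {x : (Fin m → ℕ) × (ℕ → ℕ → ℕ) // x.1 ∈ RR l m ∧ x.2 ∈ Fill (extr x.1) m} where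
  toFun T := ⟨(fun i : Fin m => cnt l m T.1 (m - 1 - i), fun i j => if j < cnt l m T.1 i then T.1 i j else 0), by
    have := red_mem hl T.2
    rw [extr_cnt hl T.2]
    exact this⟩
  invFun x := ⟨expa l m (extr x.1.1) x.1.2, expa_mem h0 hl x.2.1 x.2.2⟩
  left_inv T := by
    apply Subtype.ext
    funext i j
    simp only [expa]
    rw [extr_cnt hl T.2]
    split_ifs with h1 h2
    · rfl
    · have h3 := T.2.2.2.2 i j h2
      have h4 := cnt_iff (m := m) T.2 i j
      by_contra h5
      exact h1 (h4.2 ⟨h2, by omega⟩)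
    · exact (T.2.2.2.1 i j (by omega)).symm
  right_inv x := by
    obtain ⟨⟨r, T⟩, hr, hT⟩ := x
    apply Subtype.ext
    apply Prod.ext
    · funext i
      simp only at hr hT ⊢
      rw [cnt_expa hr hT]
      unfold extr
      rw [dif_pos (by have := i.2; omega)]
      congr 1
      apply Fin.ext; simp; have := i.2; omega
    · funext i j
      simp only at hr hT ⊢
      rw [cnt_expa hr hT]
      unfold expa
      split_ifs with h
      · rfl
      · exact (hT.2.2.1 i j (by omega)).symm

lemma sum_Icc_ch (a b i j : ℕ) (h : a ≤ b) :
    ∑ x ∈ Icc a b, ((x + i).choose j : ℤ) = (b + i + 1).choose (j+1) - (a + i).choose (j+1) := by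
  induction b, h using Nat.le_induction with
  | base =>
    have := Nat.choose_succ_succ (a+i) j
    simp only [Nat.succ_eq_add_one] at this
    rw [this]; simp
  | succ b hb ih =>
    rw [Finset.sum_Icc_succ_top (by omega), ih]
    have := Nat.choose_succ_succ (b+1+i) j
    simp only [Nat.succ_eq_add_one] at this
    rw [this, show b + 1 + i = b + i + 1 by ring]; push_cast; ring

def DM (m : ℕ) (l : ℕ → ℕ) : Matrix (Fin m) (Fin m) ℤ :=
  Matrix.of fun i j => ((l (m - 1 - i) + i).choose j : ℤ)

lemma det_rec (l : ℕ → ℕ) (hl : Antitone l) (m : ℕ) :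
    (DM (m+1) l).det = ∑ r ∈ RR l m, (DM m (extr r)).det := by
  let B : Matrix (Fin (m+1)) (Fin (m+1)) ℤ := Matrix.of (Fin.cases (fun j => DM (m+1) l 0 j) (fun i j => DM (m+1) l i.succ j - DM (m+1) l i.castSucc j))
  have h1 : (DM (m+1) l).det = B.det := by
    apply Matrix.det_eq_of_forall_row_eq_smul_add_pred (fun _ => 1)
    · intro j; rfl
    · intro i j; simp [B]
  rw [h1, Matrix.det_succ_column_zero, Fin.sum_univ_succ]
  have hz : ∀ i : Fin m, B i.succ 0 = 0 := by intro i; simp [B, DM]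
  have ho : B 0 0 = 1 := by simp [B, DM]
  simp only [hz, ho]
  simp only [Fin.val_zero, pow_zero, mul_one, one_mul, mul_zero, zero_mul, sum_const_zero, add_zero]
  have h2 : B.submatrix (Fin.succAbove 0) Fin.succ = Matrix.of fun i : Fin m => ∑ x ∈ Icc (l (m - i)) (l (m - 1 - i)), (fun j : Fin m => ((x + i).choose j : ℤ)) := by
    ext i j
    simp only [Matrix.submatrix_apply, Matrix.of_apply, Fin.succAbove_zero]
    rw [Finset.sum_apply, sum_Icc_ch _ _ _ _ (hl (by omega))]
    simp [B, DM]
    have := i.2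
    rw [show m - (i.1+1) = m - 1 - i by omega]
    rfl
  rw [h2]
  have h3 := MultilinearMap.map_sum_finset (Matrix.detRowAlternating (n := Fin m) (R := ℤ)).toMultilinearMap
    (fun (i : Fin m) (x : ℕ) => (fun j : Fin m => ((x + i).choose j : ℤ))) (fun i => Icc (l (m - i)) (l (m - 1 - i)))
  refine h3.trans ?_
  unfold RR
  apply sum_congr rfl
  intro r hr
  show Matrix.det _ = _
  congr 1
  ext i j
  simp only [DM, Matrix.of_apply]
  congr 3
  unfold extr
  have := i.2
  rw [dif_pos (by omega)]
  congr 1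
  apply Fin.ext; simp; omega

theorem fill_count (m : ℕ) : ∀ (l : ℕ → ℕ), Antitone l → (∀ i, m ≤ i → l i = 0) →
    Finite (Fill l m) ∧ (Nat.card (Fill l m) : ℤ) = (DM m l).det := by
  induction m with
  | zero =>
    intro l hl h0
    have : Fill l 0 = {fun _ _ => 0} := by
      ext T
      simp only [Set.mem_singleton_iff]
      constructor
      · intro h
        funext i j
        exact h.2.2.1 i j (by rw [h0 i (by omega)]; omega)
      · rintro rfl
        refine ⟨by simp, ?_, by simp, ?_⟩
        · intro i1 i2 j _ h; rw [h0 _ (by omega)] at h; omega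
        · intro i2 j h; rw [h0 _ (by omega)] at h; omega
    rw [this]
    refine ⟨inferInstance, by simp⟩
  | succ m ih =>
    intro l hl h0
    let e2 : {x : (Fin m → ℕ) × (ℕ → ℕ → ℕ) // x.1 ∈ RR l m ∧ x.2 ∈ Fill (extr x.1) m} ≃
       Σ r : {r // r ∈ RR l m}, Fill (extr r.1) m :=
      { toFun := fun x => ⟨⟨x.1.1, x.2.1⟩, ⟨x.1.2, x.2.2⟩⟩
        invFun := fun y => ⟨(y.1.1, y.2.1), y.1.2, y.2.2⟩
        left_inv := fun x => rfl
        right_inv := fun y => rfl }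
    let e := (fillEquiv l hl m h0).trans e2
    have hf : ∀ r : {r // r ∈ RR l m}, Finite (Fill (extr r.1) m) := fun r =>
      (ih _ (extr_anti l m _ r.2) (extr_zero _)).1
    refine ⟨Finite.of_equiv _ e.symm, ?_⟩
    rw [Nat.card_congr e, Nat.card_sigma, det_rec l hl, ← sum_coe_sort (RR l m)]
    push_cast
    apply sum_congr rfl
    intro r _
    exact (ih _ (extr_anti l m _ r.2) (extr_zero _)).2

lemma det_ratio (l : ℕ → ℕ) (m : ℕ) (h0 : l m = 0) :
    (DM (m+1) l).det * (m.factorial : ℤ) = (DM m l).det * (∏ k ∈ range m, (l k + (m - k)) : ℕ) := by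
  rw [Matrix.det_succ_row_zero, Fin.sum_univ_succ]
  have hz : ∀ i : Fin m, DM (m+1) l 0 i.succ = 0 := by intro i; simp [DM, h0]
  have ho : DM (m+1) l 0 0 = 1 := by simp [DM]
  simp only [hz, ho]
  simp only [Fin.val_zero, pow_zero, mul_one, one_mul, mul_zero, zero_mul, sum_const_zero, add_zero]
  have hp1 : (m.factorial : ℤ) = ∏ j : Fin m, ((j : ℤ) + 1) := by
    rw [← Finset.prod_range_add_one_eq_factorial, prod_range]; push_cast; rfl
  have hp2 : ((∏ k ∈ range m, (l k + (m - k)) : ℕ) : ℤ) = ∏ i : Fin m, ((l (m - 1 - i) + i : ℤ) + 1) := by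
    rw [← prod_range_reflect, prod_range]; push_cast
    apply prod_congr rfl
    intro i _
    have := i.2
    rw [show m - (m - 1 - i.1) = i + 1 by omega]
    push_cast; ring
  rw [hp1, hp2, mul_comm, ← Matrix.det_mul_row, mul_comm, ← Matrix.det_mul_column]
  congr 1
  ext i j
  simp only [Matrix.of_apply, Matrix.submatrix_apply, DM, Fin.succAbove_zero]
  have := i.2
  have h := Nat.add_one_mul_choose_eq (l (m - 1 - i) + i) j
  simp only [Fin.val_succ]
  rw [show m + 1 - 1 - (i.1+1) = m - 1 - i by omega, ← add_assoc]
  zify at h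
  linear_combination -h

lemma SSYTle_eq_fill (μ : YoungDiagram) (m : ℕ) : SSYTle μ m = Nat.card (Fill μ.rowLen m) := by
  unfold SSYTle
  apply Nat.card_congr
  exact {
    toFun := fun T => ⟨fun i j => T.1 i j, by
      refine ⟨?_, ?_, ?_, ?_⟩
      · intro i j1 j2 h1 h2
        exact T.1.row_weak h1 (YoungDiagram.mem_iff_lt_rowLen.2 h2)
      · intro i1 i2 j h1 h2
        exact T.1.col_strict h1 (YoungDiagram.mem_iff_lt_rowLen.2 h2)
      · intro i j h
        exact T.1.zeros (by rw [YoungDiagram.mem_iff_lt_rowLen]; omega)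
      · intro i j h
        exact T.2 i j (YoungDiagram.mem_iff_lt_rowLen.2 h)⟩
    invFun := fun T => ⟨⟨T.1,
      fun h1 h2 => T.2.1 _ _ _ h1 (YoungDiagram.mem_iff_lt_rowLen.1 h2),
      fun h1 h2 => T.2.2.1 _ _ _ h1 (YoungDiagram.mem_iff_lt_rowLen.1 h2),
      fun h => T.2.2.2.1 _ _ (by rw [YoungDiagram.mem_iff_lt_rowLen] at h; omega)⟩,
      fun i j h => T.2.2.2.2 i j (YoungDiagram.mem_iff_lt_rowLen.1 h)⟩
    left_inv := fun T => rfl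
    right_inv := fun T => rfl }

lemma SSYTle_zero (μ : YoungDiagram) (m h : ℕ) (hm : m < h) (hh : 0 < μ.rowLen (h-1)) : SSYTle μ m = 0 := by
  rw [SSYTle_eq_fill, Nat.card_eq_zero]
  left
  constructor
  rintro ⟨T, hT⟩
  have h1 := Fill_ge (fun i j h => μ.rowLen_anti i j h) hT _ _ hh
  have h2 := hT.2.2.2 _ _ hh
  omega

lemma QYTeq_zero (μ : YoungDiagram) (m h : ℕ) (hm : m < h) (hh : 0 < μ.rowLen (h-1)) : QYTeq μ m = 0 := by
  unfold QYTeq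
  rw [Nat.card_eq_zero]
  left
  constructor
  rintro ⟨T, hT, hT2, -⟩
  have hc : (h-1, 0) ∈ μ := YoungDiagram.mem_iff_lt_rowLen.2 hh
  have h2 := hT2 _ _ hc
  have : ∀ i, (i, 0) ∈ μ → i ≤ T i 0 := by
    intro i
    induction i with
    | zero => intro _; omega
    | succ i ih =>
      intro hi
      have := ih (μ.up_left_mem (Nat.le_succ i) le_rfl hi)
      have := T.col_strict (show i < i + 1 by omega) hi
      omega
  have := this _ hc
  omega

lemma prod_Ico_fac (c s t : ℕ) (h : s ≤ t) (ht : t ≤ c) :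
    (∏ k ∈ Ico s t, (c - k)) * (c - t).factorial = (c - s).factorial := by
  induction t, h using Nat.le_induction with
  | base => simp
  | succ t hst ih =>
    rw [prod_Ico_succ_top hst, ← ih (by omega), mul_assoc]
    congr 1
    rw [show c - t = (c - (t+1)) + 1 by omega, Nat.factorial_succ]

lemma shape_prod (l1 l2 h1 h2 m : ℕ) (hh2 : 2 ≤ h2) (hh : h2 ≤ h1) (hm1 : h1 ≤ m)
    (μ : YoungDiagram) (hμ : HasRows2 μ l1 l2 h1 h2) :
    (∏ k ∈ range m, (μ.rowLen k + (m - k))) * ((m + 1 - h1) * (m + 2 - h2)) =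
      m.factorial * ((l1 + m) * (l2 + m - 1)) := by
  obtain ⟨r0, r1, r2, r3, r4⟩ := hμ
  rw [range_eq_Ico, ← prod_Ico_consecutive _ (show 0 ≤ 2 by omega) (show 2 ≤ m by omega),
    ← prod_Ico_consecutive _ (show 2 ≤ h2 by omega) (show h2 ≤ m by omega),
    ← prod_Ico_consecutive _ (show h2 ≤ h1 by omega) (show h1 ≤ m by omega)]
  have p0 : ∏ k ∈ Ico 0 2, (μ.rowLen k + (m - k)) = (l1 + m) * (l2 + m - 1) := by
    rw [← range_eq_Ico, prod_range_succ, prod_range_one, r0, r1]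
    congr 1
    omega
  have p1 : ∏ k ∈ Ico 2 h2, (μ.rowLen k + (m - k)) = ∏ k ∈ Ico 2 h2, (m + 2 - k) := by
    apply prod_congr rfl
    intro k hk
    rw [mem_Ico] at hk
    rw [r2 k hk.1 hk.2]; omega
  have p2 : ∏ k ∈ Ico h2 h1, (μ.rowLen k + (m - k)) = ∏ k ∈ Ico h2 h1, (m + 1 - k) := by
    apply prod_congr rfl
    intro k hk
    rw [mem_Ico] at hk
    rw [r3 k hk.1 hk.2]; omega
  have p3 : ∏ k ∈ Ico h1 m, (μ.rowLen k + (m - k)) = ∏ k ∈ Ico h1 m, (m - k) := by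
    apply prod_congr rfl
    intro k hk
    rw [mem_Ico] at hk
    rw [r4 k hk.1]; omega
  rw [p0, p1, p2, p3]
  have q1 := prod_Ico_fac (m+2) 2 h2 (by omega) (by omega)
  have q2 := prod_Ico_fac (m+1) h2 h1 (by omega) (by omega)
  have q3 := prod_Ico_fac m h1 m (by omega) (by omega)
  have f1 : (m + 2 - h2).factorial = (m + 2 - h2) * (m + 1 - h2).factorial := by
    rw [show m + 2 - h2 = (m + 1 - h2) + 1 by omega, Nat.factorial_succ]
  have f2 : (m + 1 - h1).factorial = (m + 1 - h1) * (m - h1).factorial := by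
    rw [show m + 1 - h1 = (m - h1) + 1 by omega, Nat.factorial_succ]
  rw [show m + 2 - 2 = m by omega] at q1
  rw [Nat.sub_self, Nat.factorial_zero, mul_one] at q3
  have fp := Nat.factorial_pos (m + 1 - h2)
  apply Nat.eq_of_mul_eq_mul_right fp
  rw [f1] at q1
  rw [f2] at q2
  rw [q3]
  calc _ = ((l1 + m) * (l2 + m - 1)) * ((∏ k ∈ Ico 2 h2, (m + 2 - k)) * ((m + 2 - h2) * (m + 1 - h2).factorial)) * ((∏ k ∈ Ico h2 h1, (m + 1 - k)) * ((m + 1 - h1) * (m - h1).factorial)) := by ring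
    _ = _ := by rw [q1, q2]; ring

lemma shape_card (l1 l2 h1 h2 : ℕ) (hh2 : 2 ≤ h2) (hh : h2 ≤ h1)
    (μ : YoungDiagram) (hμ : HasRows2 μ l1 l2 h1 h2) :
    μ.card = l1 + l2 + 2 * (h2 - 2) + (h1 - h2) := by
  obtain ⟨r0, r1, r2, r3, r4⟩ := hμ
  have : μ.card = ∑ i ∈ range h1, μ.rowLen i := by
    show μ.cells.card = _
    rw [card_eq_sum_card_fiberwise (f := Prod.fst) (t := range h1)]
    · apply sum_congr rfl
      intro i _
      rw [YoungDiagram.rowLen_eq_card]; rfl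
    · rintro ⟨i, j⟩ h
      have h : (i, j) ∈ μ := by simpa using h
      rw [YoungDiagram.mem_iff_lt_rowLen] at h
      simp
      by_contra h'
      rw [r4 i (by omega)] at h
      omega
  rw [this, range_eq_Ico, ← sum_Ico_consecutive _ (show 0 ≤ 2 by omega) (show 2 ≤ h1 by omega),
    ← sum_Ico_consecutive _ (show 2 ≤ h2 by omega) hh]
  rw [sum_congr rfl (g := fun _ => 2) (s₁ := Ico 2 h2) (fun k hk => by rw [mem_Ico] at hk; exact r2 k hk.1 hk.2),
    sum_congr rfl (g := fun _ => 1) (s₁ := Ico h2 h1) (fun k hk => by rw [mem_Ico] at hk; exact r3 k hk.1 hk.2)]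
  rw [← range_eq_Ico, sum_range_succ, sum_range_one, r0, r1]
  simp
  ring

lemma SSYT_ratio (l1 l2 h1 h2 m : ℕ) (hh2 : 2 ≤ h2) (hh : h2 ≤ h1) (hm1 : h1 ≤ m)
    (μ : YoungDiagram) (hμ : HasRows2 μ l1 l2 h1 h2) :
    SSYTle μ (m+1) * ((m + 1 - h1) * (m + 2 - h2)) = SSYTle μ m * ((l1 + m) * (l2 + m - 1)) := by
  have h0 : ∀ i, h1 ≤ i → μ.rowLen i = 0 := hμ.2.2.2.2
  have ha : Antitone μ.rowLen := fun i j h => μ.rowLen_anti i j h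
  have c1 := (fill_count m μ.rowLen ha (fun i hi => h0 i (by omega))).2
  have c2 := (fill_count (m+1) μ.rowLen ha (fun i hi => h0 i (by omega))).2
  have hr := det_ratio μ.rowLen m (h0 m hm1)
  rw [← c1, ← c2, ← SSYTle_eq_fill, ← SSYTle_eq_fill] at hr
  have hr : SSYTle μ (m+1) * m.factorial = SSYTle μ m * ∏ k ∈ range m, (μ.rowLen k + (m - k)) := by exact_mod_cast hr
  have hp := shape_prod l1 l2 h1 h2 m hh2 hh hm1 μ hμ
  apply Nat.eq_of_mul_eq_mul_right (Nat.factorial_pos m)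
  calc _ = (SSYTle μ (m+1) * m.factorial) * ((m + 1 - h1) * (m + 2 - h2)) := by ring
    _ = SSYTle μ m * ((∏ k ∈ range m, (μ.rowLen k + (m - k))) * ((m + 1 - h1) * (m + 2 - h2))) := by rw [hr]; ring
    _ = _ := by rw [hp]; ring

lemma solve_rec (S Q : ℕ → ℕ) (a b d : ℕ)
    (hS : ∀ M, S (M+1) * ((M + 1) * (M + d + 1)) = S M * ((M + a + d + 1) * (M + b + d + 1)))
    (hQ : ∀ M, S M = ∑ r ∈ range (M+1), Q r * (a + b + d + M - r).choose (a + b + d)) (M : ℕ) :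
    (M + a + d).choose M * (M + b + d).choose M * Q M = a.choose M * b.choose M * S M := by
  obtain ⟨κ, hκ⟩ : ∃ κ : ℚ, ∀ M, (S M : ℚ) = κ * ((M + a + d).choose M * (M + b + d).choose b) := by
    refine ⟨S 0 / ((b + d).choose b), fun M => ?_⟩
    induction M with
    | zero =>
      have : ((b + d).choose b : ℚ) ≠ 0 := by
        exact_mod_cast (Nat.choose_pos (by omega)).ne'
      simp; field_simp
    | succ M ih =>
      have h := hS M
      have e1 := Nat.add_one_mul_choose_eq (M + a + d) M
      have e2 := Nat.choose_mul_succ_eq (M + b + d) b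
      rw [show M + b + d + 1 - b = M + d + 1 by omega] at e2
      rw [show M + 1 + a + d = M + a + d + 1 by ring, show M + 1 + b + d = M + b + d + 1 by ring]
      have e1' : ((M + a + d + 1 : ℕ) : ℚ) * (M + a + d).choose M = (M + a + d + 1).choose (M+1) * (M + 1 : ℕ) := by exact_mod_cast e1
      have e2' : ((M + b + d).choose b : ℚ) * (M + b + d + 1 : ℕ) = (M + b + d + 1).choose b * (M + d + 1 : ℕ) := by exact_mod_cast e2
      have h' : (S (M+1) : ℚ) * ((M + 1 : ℕ) * (M + d + 1 : ℕ)) = S M * ((M + a + d + 1 : ℕ) * (M + b + d + 1 : ℕ)) := by exact_mod_cast h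
      have hne : (((M + 1 : ℕ) : ℚ) * (M + d + 1 : ℕ)) ≠ 0 := by positivity
      apply mul_right_cancel₀ hne
      rw [h', ih]
      set κ := (S 0 : ℚ) / ((b + d).choose b)
      calc _ = κ * ((((M + a + d + 1 : ℕ) : ℚ) * (M + a + d).choose M) * (((M + b + d).choose b : ℚ) * (M + b + d + 1 : ℕ))) := by ring
        _ = _ := by rw [e1', e2']; ring
  have hq : ∀ M, (Q M : ℚ) = κ * (a.choose M * (b + d).choose (M + d)) := by
    intro M
    induction M using Nat.strong_induction_on with
    | _ M ih =>
      have h1 := hQ M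
      have h2 := nanj a b d M
      rw [sum_range_succ] at h1 h2
      rw [show a + b + d + M - M = a + b + d by omega, Nat.choose_self, mul_one] at h1 h2
      have h3 := hκ M
      have h2' : (((M + a + d).choose M : ℚ) * (M + b + d).choose b) = ((∑ r ∈ range M, a.choose r * (b + d).choose (r + d) * (a + b + d + M - r).choose (a + b + d) + a.choose M * (b + d).choose (M + d) : ℕ) : ℚ) := by
        rw [h2]; push_cast; ring
      rw [h1, h2'] at h3
      push_cast at h3
      have h4 : ∑ r ∈ range M, (Q r : ℚ) * (a + b + d + M - r).choose (a + b + d) = κ * ∑ r ∈ range M, (a.choose r : ℚ) * (b + d).choose (r + d) * (a + b + d + M - r).choose (a + b + d) := by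
        rw [mul_sum]
        apply sum_congr rfl
        intro r hr
        rw [ih r (mem_range.1 hr)]; ring
      rw [h4] at h3
      linarith
  have hb : (M + b + d).choose M * (b + d).choose (M + d) = b.choose M * (M + b + d).choose b := by
    rcases le_or_gt M b with h | h
    · obtain ⟨t, rfl⟩ := Nat.exists_eq_add_of_le h
      have acf : ∀ i j : ℕ, (i + j).choose i * i.factorial * j.factorial = (i + j).factorial := fun i j => by
        rw [Nat.choose_symm_add, Nat.add_choose_mul_factorial_mul_factorial]
      have e1 := acf M (M + t + d)
      have e2 := acf (M + d) t
      have e3 := acf M t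
      have e4 := acf (M + t) (M + d)
      rw [show M + (M + t + d) = M + (M + t) + d by ring] at e1
      rw [show M + d + t = M + t + d by ring] at e2
      rw [show M + t + (M + d) = M + (M + t) + d by ring] at e4
      have hp : 0 < M.factorial * (M+d).factorial * t.factorial := by positivity
      apply Nat.eq_of_mul_eq_mul_right hp
      calc _ = (M + (M + t) + d).choose M * M.factorial * ((M + t + d).choose (M + d) * (M+d).factorial * t.factorial) := by ring
        _ = (M + (M + t) + d).factorial := by rw [e2, e1]
        _ = (M + (M + t) + d).choose (M + t) * ((M + t).choose M * M.factorial * t.factorial) * (M + d).factorial := by rw [e3, e4]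
        _ = _ := by ring
    · rw [Nat.choose_eq_zero_of_lt (show b < M by omega), Nat.choose_eq_zero_of_lt (show b + d < M + d by omega)]; simp
  have hb' : ((M + b + d).choose M : ℚ) * (b + d).choose (M + d) = b.choose M * (M + b + d).choose b := by exact_mod_cast hb
  have : (((M + a + d).choose M * (M + b + d).choose M * Q M : ℕ) : ℚ) = (a.choose M * b.choose M * S M : ℕ) := by
    push_cast
    rw [hq, hκ]
    linear_combination ((M + a + d).choose M : ℚ) * κ * a.choose M * hb'
  exact_mod_cast this

end aux

/-- the identity
`C(m+λ₁-1, m-h₁) · C(m+λ₂-2, m-h₁) · QYT_{=m}(λ) = C(λ₁+h₂-2, m-h₁) · C(λ₂+h₂-3, m-h₁) · SSYT_m(λ)`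
for `λ = (λ₁, λ₂, 2^{h₂-2}, 1^{h₁-h₂})`. -/
theorem qyt_ssyt_identity_two (l1 l2 h1 h2 m : ℕ)
    (hl2 : 2 ≤ l2) (hl : l2 ≤ l1) (hh2 : 2 ≤ h2) (hh : h2 ≤ h1)
    (hm1 : h1 ≤ m) (hm2 : m ≤ h1 + h2 + l2 - 3)
    (μ : YoungDiagram) (hμ : HasRows2 μ l1 l2 h1 h2) :
    (m + l1 - 1).choose (m - h1) * (m + l2 - 2).choose (m - h1) * QYTeq μ m =
      (l1 + h2 - 2).choose (m - h1) * (l2 + h2 - 3).choose (m - h1) * SSYTle μ m := by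
  obtain ⟨M, rfl⟩ := Nat.exists_eq_add_of_le hm1
  have hcard := shape_card l1 l2 h1 h2 hh2 hh μ hμ
  have hrow : 0 < μ.rowLen (h1 - 1) := by
    obtain ⟨r0, r1, r2, r3, r4⟩ := hμ
    rcases hh.lt_or_eq with h | h
    · rw [r3 (h1-1) (by omega) (by omega)]; omega
    · rcases (show h1 = 2 ∨ 2 < h1 by omega) with h' | h'
      · subst h'; rw [r1]; omega
      · rw [r2 (h1-1) (by omega) (by omega)]; omega
  have key := solve_rec (fun M => SSYTle μ (h1 + M)) (fun M => QYTeq μ (h1 + M)) (l1 + h2 - 2) (l2 + h2 - 3) (h1 - h2 + 1)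
    (by
      intro M
      have := SSYT_ratio l1 l2 h1 h2 (h1 + M) hh2 hh (by omega) μ hμ
      rw [show h1 + M + 1 - h1 = M + 1 by omega, show h1 + M + 2 - h2 = M + (h1 - h2 + 1) + 1 by omega,
        show l1 + (h1 + M) = M + (l1 + h2 - 2) + (h1 - h2 + 1) + 1 by omega,
        show l2 + (h1 + M) - 1 = M + (l2 + h2 - 3) + (h1 - h2 + 1) + 1 by omega] at this
      exact this)
    (by
      intro M
      have := SSYT_sum (μ := μ) (by omega) (h1 + M)
      rw [this, show h1 + M = (h1 - 1) + (M + 1) by omega, Finset.sum_range_add, Finset.sum_eq_zero, zero_add]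
      · apply Finset.sum_congr rfl
        intro r hr
        rw [Finset.mem_range] at hr
        rw [show h1 - 1 + r + 1 = h1 + r by omega, hcard,
          show l1 + l2 + 2 * (h2 - 2) + (h1 - h2) = l1 + h2 - 2 + (l2 + h2 - 3) + (h1 - h2 + 1) by omega]
        congr 2
        omega
      · intro r hr
        rw [Finset.mem_range] at hr
        rw [QYTeq_zero μ (r+1) h1 (by omega) hrow, zero_mul]) M
  rw [show h1 + M + l1 - 1 = M + (l1 + h2 - 2) + (h1 - h2 + 1) by omega,
    show h1 + M + l2 - 2 = M + (l2 + h2 - 3) + (h1 - h2 + 1) by omega,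
    show h1 + M - h1 = M by omega]
  exact key
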